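/- In the setting of the previous statement, let U = {(s,t) ∈ T × T : |s−t| ≤ κ_m/N} equipped with the pseudo-metric d_ξ, and let N(ε) be the smallest number of d_ξ-balls of radius ε needed to cover U. Then there exist constants κ̃ and ε̃, uniform over all σ in the class C1 and all fields f satisfying C3–C4, such that: (i) for every ε ∈ (0, 1), log N(ε) ≤ log κ̃ + (4d/β*) log(1/ε); and (ii) the diameter of U under d_ξ satisfies diam_{d_ξ}(U) ≤ κ̃ · N^{−β*/2}. -/

import Mathlib

open MeasureTheory ProbabilityTheory Filter Set

/-- The near-diagonal set `U = {(s,t) ∈ T × T : |s−t| ≤ κ_m/N}`. -/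
def nearDiag (d : ℕ) (T : Set (EuclideanSpace ℝ (Fin d))) (κm : ℝ) (N : ℕ) :
    Set ((EuclideanSpace ℝ (Fin d)) × (EuclideanSpace ℝ (Fin d))) :=
  {p | p.1 ∈ T ∧ p.2 ∈ T ∧ dist p.1 p.2 ≤ κm / N}

/-- The canonical pseudo-metric of the increment field `ξ(s,t) = σ(s)f(s) − σ(t)f(t)`:
`d_ξ((s,t),(s',t')) = (E[(ξ(s,t) − ξ(s',t'))²])^{1/2}`. -/
noncomputable def xiDist {Ω : Type*} [MeasurableSpace Ω] (P : Measure Ω)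
    {E : Type*} (f : E → Ω → ℝ) (σ : E → ℝ) (p q : E × E) : ℝ :=
  Real.sqrt (∫ ω, ((σ p.1 * f p.1 ω - σ p.2 * f p.2 ω) -
    (σ q.1 * f q.1 ω - σ q.2 * f q.2 ω)) ^ 2 ∂P)

/-- `N(ε)`: the smallest number of closed `D`-balls of radius `ε` with centers in `S`
needed to cover `S`. -/
noncomputable def coverNumOn {α : Type*} (S : Set α) (D : α → α → ℝ) (ε : ℝ) : ℕ :=
  sInf {n : ℕ | ∃ s : Finset α, s.card = n ∧ ↑s ⊆ S ∧ ∀ x ∈ S, ∃ c ∈ s, D x c ≤ ε}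

/-!
Linearity turns `d_ξ` into an `L²` distance between increments of the process `X = σ f`. The
identity `E (f s - f t)² = 2 (1 - r(s, t))` shows that `f` is `β'/2`-Hölder in `L²`, and `σ` is
bounded and `β`-Hölder, so `X` is `β*/2`-Hölder in `L²`. Pairing the four points of
`(X p.1 - X p.2) - (X q.1 - X q.2)` coordinate by coordinate, the triangle inequality makes `d_ξ`
a `β*/2`-Hölder function of the Euclidean distance on `T × T`, a bounded subset of a space of
dimension `2d`, and volume comparison bounds its entropy. Pairing them within `p` and within `q`
instead bounds `d_ξ` by the distance to the diagonal, hence the diameter of `U`.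
-/

open Metric Module
open scoped NNReal ENNReal

section Covering

section FiniteDimensional

variable {F : Type*} [NormedAddCommGroup F] [NormedSpace ℝ F] [FiniteDimensional ℝ F]

lemma card_le_of_isSeparated_of_subset_closedBall {s : Finset F} {δ : ℝ≥0} {R : ℝ} (hR : 0 ≤ R)
    (hδ : 0 < δ) (hs : IsSeparated δ (s : Set F)) (hsR : ↑s ⊆ closedBall (0 : F) R) :
    (s.card : ℝ) ≤ (1 + 2 * R / δ) ^ finrank ℝ F := by
  borelize F
  let μ : Measure F := Measure.addHaar
  have hδ' : (0 : ℝ) < δ := hδ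
  have hdisj : (s : Set F).PairwiseDisjoint fun x => closedBall x (δ / 2 : ℝ) := by
    intro x hx y hy hxy
    refine closedBall_disjoint_closedBall ?_
    have hsep : (δ : ℝ≥0∞) < edist x y := hs hx hy hxy
    rw [edist_nndist, ENNReal.coe_lt_coe, ← NNReal.coe_lt_coe, coe_nndist] at hsep
    linarith
  have hsub : (⋃ x ∈ s, closedBall x (δ / 2 : ℝ)) ⊆ closedBall 0 (R + δ / 2) :=
    iUnion₂_subset fun x hx => closedBall_subset_closedBall' <| by
      linarith [mem_closedBall.1 (hsR hx)]
  have hvol : s.card * ((δ / 2 : ℝ) ^ finrank ℝ F * μ.real (ball 0 1)) ≤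
      (R + δ / 2) ^ finrank ℝ F * μ.real (ball 0 1) :=
    calc s.card * ((δ / 2 : ℝ) ^ finrank ℝ F * μ.real (ball 0 1))
        = ∑ x ∈ s, μ.real (closedBall x (δ / 2)) := by
          simp only [Measure.addHaar_real_closedBall μ _ (half_pos hδ').le, Finset.sum_const,
            nsmul_eq_mul]
      _ = μ.real (⋃ x ∈ s, closedBall x (δ / 2)) :=
          (measureReal_biUnion_finset hdisj (fun _ _ => measurableSet_closedBall)
            fun _ _ => measure_closedBall_lt_top.ne).symm
      _ ≤ μ.real (closedBall 0 (R + δ / 2)) := measureReal_mono hsub measure_closedBall_lt_top.ne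
      _ = (R + δ / 2) ^ finrank ℝ F * μ.real (ball 0 1) :=
          Measure.addHaar_real_closedBall μ 0 (by positivity)
  have hball : 0 < μ.real (ball (0 : F) 1) :=
    ENNReal.toReal_pos (measure_ball_pos μ 0 one_pos).ne' measure_ball_lt_top.ne
  rw [← mul_assoc] at hvol
  calc (s.card : ℝ) ≤ (R + δ / 2) ^ finrank ℝ F / (δ / 2) ^ finrank ℝ F :=
        (le_div_iff₀ (by positivity)).2 (le_of_mul_le_mul_right hvol hball)
    _ = (1 + 2 * R / δ) ^ finrank ℝ F := by
        rw [← div_pow]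
        congr 1
        field_simp
        ring

lemma packingNumber_le_of_subset_closedBall {S : Set F} {δ : ℝ≥0} {R : ℝ} (hR : 0 ≤ R)
    (hδ : 0 < δ) (hS : S ⊆ closedBall (0 : F) R) :
    packingNumber δ S ≤ ⌊(1 + 2 * R / δ) ^ finrank ℝ F⌋₊ := by
  refine iSup₂_le fun C hCS => iSup_le fun hC => ?_
  by_contra! hlt
  obtain ⟨s, hsC, hs⟩ := exists_subset_encard_eq (Order.add_one_le_of_lt hlt)
  lift s to Finset F using finite_of_encard_eq_coe (mod_cast hs)
  have hcard : s.card = ⌊(1 + 2 * R / δ) ^ finrank ℝ F⌋₊ + 1 := by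
    rw [encard_coe_eq_coe_finsetCard] at hs
    exact_mod_cast hs
  have hle := Nat.le_floor <| card_le_of_isSeparated_of_subset_closedBall hR hδ
    (hC.subset hsC) (hsC.trans (hCS.trans hS))
  omega

end FiniteDimensional

lemma coverNumOn_le_coveringNumber {α : Type*} [PseudoMetricSpace α] {S : Set α}
    {D : α → α → ℝ} {ε : ℝ} {δ : ℝ≥0}
    (hD : ∀ x ∈ S, ∀ y ∈ S, dist x y ≤ δ → D x y ≤ ε) :
    (coverNumOn S D ε : ℕ∞) ≤ coveringNumber δ S := by
  by_cases hfin : coveringNumber δ S = ⊤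
  · simp [hfin]
  obtain ⟨C, hCS, hC, hcov, hcard⟩ := exists_set_encard_eq_coveringNumber hfin
  lift C to Finset α using hC
  rw [← hcard, encard_coe_eq_coe_finsetCard, Nat.cast_le]
  refine Nat.sInf_le ⟨C, rfl, hCS, fun x hx => ?_⟩
  obtain ⟨c, hc, hxc⟩ := hcov hx
  refine ⟨c, hc, hD x hx c (hCS hc) ?_⟩
  rw [dist_nndist]
  exact_mod_cast (edist_nndist x c).symm.trans_le hxc

lemma coverNumOn_le_of_holder {F : Type*} [NormedAddCommGroup F] [NormedSpace ℝ F]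
    [FiniteDimensional ℝ F] {S : Set F} {D : F → F → ℝ} {R A α ε : ℝ} (hR : 0 ≤ R)
    (hS : S ⊆ closedBall 0 R) (hA : 0 < A) (hα : 0 < α)
    (hD : ∀ x ∈ S, ∀ y ∈ S, D x y ≤ A * dist x y ^ α) (hε : 0 < ε) (hε1 : ε ≤ 1) :
    (coverNumOn S D ε : ℝ) ≤
      (1 + 2 * R * A ^ α⁻¹) ^ finrank ℝ F * (1 / ε) ^ (finrank ℝ F / α) := by
  let δ : ℝ≥0 := ⟨(ε / A) ^ α⁻¹, by positivity⟩
  have hδ : 0 < δ := NNReal.coe_pos.1 (by positivity : (0 : ℝ) < (ε / A) ^ α⁻¹)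
  have hDδ : ∀ x ∈ S, ∀ y ∈ S, dist x y ≤ δ → D x y ≤ ε := fun x hx y hy hxy =>
    calc D x y ≤ A * dist x y ^ α := hD x hx y hy
      _ ≤ A * ((ε / A) ^ α⁻¹) ^ α := by gcongr; exact hxy
      _ = ε := by
        rw [Real.rpow_inv_rpow (by positivity) hα.ne']
        field_simp
  have hnum : coverNumOn S D ε ≤ ⌊(1 + 2 * R / δ) ^ finrank ℝ F⌋₊ := by
    exact_mod_cast (coverNumOn_le_coveringNumber hDδ).trans <|
      (coveringNumber_le_packingNumber δ S).trans <| packingNumber_le_of_subset_closedBall hR hδ hS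
  have hδinv : (δ : ℝ)⁻¹ = A ^ α⁻¹ * (1 / ε) ^ α⁻¹ := by
    change ((ε / A) ^ α⁻¹)⁻¹ = _
    rw [← Real.inv_rpow (by positivity), ← Real.mul_rpow hA.le (by positivity)]
    congr 1
    field_simp
  have hone : 1 ≤ (1 / ε) ^ α⁻¹ := Real.one_le_rpow ((one_le_div hε).2 hε1) (by positivity)
  calc (coverNumOn S D ε : ℝ) ≤ (1 + 2 * R / δ) ^ finrank ℝ F :=
        (Nat.cast_le.2 hnum).trans (Nat.floor_le (by positivity))
    _ = (1 + 2 * R * A ^ α⁻¹ * (1 / ε) ^ α⁻¹) ^ finrank ℝ F := by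
        rw [div_eq_mul_inv, hδinv, ← mul_assoc]
    _ ≤ ((1 + 2 * R * A ^ α⁻¹) * (1 / ε) ^ α⁻¹) ^ finrank ℝ F := by
        gcongr
        rw [add_mul, one_mul]
        gcongr
    _ = (1 + 2 * R * A ^ α⁻¹) ^ finrank ℝ F * (1 / ε) ^ (finrank ℝ F / α) := by
        rw [mul_pow, ← Real.rpow_mul_natCast (by positivity), inv_mul_eq_div]

end Covering

section RealPowers

lemma rpow_le_mul_rpow_of_exponent_le {x D a b : ℝ} (hx : 0 ≤ x) (hxD : x ≤ D) (ha : 0 ≤ a)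
    (hab : a ≤ b) : x ^ b ≤ D ^ (b - a) * x ^ a :=
  calc x ^ b = x ^ (b - a) * x ^ a := by
        rw [← Real.rpow_add_of_nonneg hx (sub_nonneg.2 hab) ha, sub_add_cancel]
    _ ≤ D ^ (b - a) * x ^ a := by gcongr

lemma log_natCast_le_of_le_mul_rpow {n : ℕ} {c x e : ℝ} (hc : 1 ≤ c) (hx : 1 ≤ x) (he : 0 ≤ e)
    (hn : (n : ℝ) ≤ c * x ^ e) : Real.log n ≤ Real.log c + e * Real.log x := by
  have hx0 : 0 < x := one_pos.trans_le hx
  rw [← Real.log_rpow hx0, ← Real.log_mul (by positivity) (by positivity)]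
  rcases n.eq_zero_or_pos with rfl | hpos
  · rw [Nat.cast_zero, Real.log_zero]
    exact Real.log_nonneg (one_le_mul_of_one_le_of_one_le hc (Real.one_le_rpow hx he))
  · exact Real.log_le_log (Nat.cast_pos.2 hpos) hn

end RealPowers

section LpHolder

variable {Ω : Type*} [MeasurableSpace Ω] {P : Measure Ω} {E : Type*} [PseudoMetricSpace E]

/-- Hölder continuity in `L^p` of a process `X` indexed by `E`, on the set `T`, with constant `C`
and exponent `α`. For `p = 2` this is mean-square Hölder continuity. -/
structure IsLpHolderOn {G : Type*} [NormedAddCommGroup G] (X : E → Ω → G) (p : ℝ≥0∞)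
    (P : Measure Ω) (C α : ℝ) (T : Set E) : Prop where
  memLp : ∀ t ∈ T, MemLp (X t) p P
  lpNorm_sub_le : ∀ s ∈ T, ∀ t ∈ T, lpNorm (X s - X t) p P ≤ C * dist s t ^ α

namespace IsLpHolderOn

variable {G : Type*} [NormedAddCommGroup G] {X : E → Ω → G} {p : ℝ≥0∞} {T : Set E} {C α : ℝ}

lemma mono_exponent {β D : ℝ} (hX : IsLpHolderOn X p P C β T) (hC : 0 ≤ C) (hα : 0 ≤ α)
    (hαβ : α ≤ β) (hD : ∀ s ∈ T, ∀ t ∈ T, dist s t ≤ D) :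
    IsLpHolderOn X p P (C * D ^ (β - α)) α T where
  memLp := hX.memLp
  lpNorm_sub_le s hs t ht :=
    calc lpNorm (X s - X t) p P ≤ C * dist s t ^ β := hX.lpNorm_sub_le s hs t ht
      _ ≤ C * (D ^ (β - α) * dist s t ^ α) := by
        gcongr
        exact rpow_le_mul_rpow_of_exponent_le dist_nonneg (hD s hs t ht) hα hαβ
      _ = C * D ^ (β - α) * dist s t ^ α := (mul_assoc _ _ _).symm

lemma smul [NormedSpace ℝ G] {σ : E → ℝ} {L M S : ℝ} (hX : IsLpHolderOn X p P C α T)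
    (hp : 1 ≤ p) (hL : 0 ≤ L) (hXM : ∀ t ∈ T, lpNorm (X t) p P ≤ M)
    (hσ : ∀ s ∈ T, ∀ t ∈ T, |σ s - σ t| ≤ L * dist s t ^ α) (hσS : ∀ t ∈ T, |σ t| ≤ S) :
    IsLpHolderOn (fun t => σ t • X t) p P (L * M + S * C) α T where
  memLp t ht := (hX.memLp t ht).const_smul (σ t)
  lpNorm_sub_le s hs t ht := by
    have hsplit : σ s • X s - σ t • X t = (σ s - σ t) • X s + σ t • (X s - X t) := by module
    calc lpNorm (σ s • X s - σ t • X t) p P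
        ≤ lpNorm ((σ s - σ t) • X s) p P + lpNorm (σ t • (X s - X t)) p P :=
          hsplit ▸ lpNorm_add_le ((hX.memLp s hs).const_smul _) hp
      _ = |σ s - σ t| * lpNorm (X s) p P + |σ t| * lpNorm (X s - X t) p P := by
          simp only [lpNorm_const_smul, coe_nnnorm, Real.norm_eq_abs]
      _ ≤ L * dist s t ^ α * M + S * (C * dist s t ^ α) :=
          add_le_add
            (mul_le_mul (hσ s hs t ht) (hXM s hs) lpNorm_nonneg (by positivity))
            (mul_le_mul (hσS t ht) (hX.lpNorm_sub_le s hs t ht) lpNorm_nonneg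
              ((abs_nonneg _).trans (hσS t ht)))
      _ = (L * M + S * C) * dist s t ^ α := by ring

lemma lpNorm_increment_sub_le_dist (hX : IsLpHolderOn X p P C α T) (hp : 1 ≤ p) (hC : 0 ≤ C)
    (hα : 0 ≤ α) {u v : E × E} (hu : u ∈ T ×ˢ T) (hv : v ∈ T ×ˢ T) :
    lpNorm ((X u.1 - X u.2) - (X v.1 - X v.2)) p P ≤ 2 * C * dist u v ^ α :=
  calc lpNorm ((X u.1 - X u.2) - (X v.1 - X v.2)) p P
      ≤ lpNorm (X u.1 - X v.1) p P + lpNorm (X u.2 - X v.2) p P :=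
        sub_sub_sub_comm (X u.1) (X u.2) (X v.1) (X v.2) ▸
          MeasureTheory.lpNorm_sub_le ((hX.memLp _ hu.1).sub (hX.memLp _ hv.1)) hp
    _ ≤ C * dist u.1 v.1 ^ α + C * dist u.2 v.2 ^ α :=
        add_le_add (hX.lpNorm_sub_le _ hu.1 _ hv.1) (hX.lpNorm_sub_le _ hu.2 _ hv.2)
    _ ≤ C * dist u v ^ α + C * dist u v ^ α := by
        rw [Prod.dist_eq]
        gcongr
        exacts [le_max_left _ _, le_max_right _ _]
    _ = 2 * C * dist u v ^ α := by ring

lemma lpNorm_increment_sub_le_of_dist_le (hX : IsLpHolderOn X p P C α T) (hp : 1 ≤ p)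
    (hC : 0 ≤ C) (hα : 0 ≤ α) {u v : E × E} (hu : u ∈ T ×ˢ T) (hv : v ∈ T ×ˢ T) {r : ℝ}
    (hur : dist u.1 u.2 ≤ r) (hvr : dist v.1 v.2 ≤ r) :
    lpNorm ((X u.1 - X u.2) - (X v.1 - X v.2)) p P ≤ 2 * C * r ^ α :=
  calc lpNorm ((X u.1 - X u.2) - (X v.1 - X v.2)) p P
      ≤ lpNorm (X u.1 - X u.2) p P + lpNorm (X v.1 - X v.2) p P :=
        MeasureTheory.lpNorm_sub_le ((hX.memLp _ hu.1).sub (hX.memLp _ hu.2)) hp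
    _ ≤ C * dist u.1 u.2 ^ α + C * dist v.1 v.2 ^ α :=
        add_le_add (hX.lpNorm_sub_le _ hu.1 _ hu.2) (hX.lpNorm_sub_le _ hv.1 _ hv.2)
    _ ≤ C * r ^ α + C * r ^ α := by gcongr
    _ = 2 * C * r ^ α := by ring

end IsLpHolderOn

end LpHolder

section SecondMoments

variable {Ω : Type*} [MeasurableSpace Ω] {P : Measure Ω}

lemma lpNorm_two_eq_sqrt_integral_sq {X : Ω → ℝ} (hX : AEStronglyMeasurable X P) :
    lpNorm X 2 P = √(∫ ω, X ω ^ 2 ∂P) := by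
  rw [lpNorm_eq_integral_norm_rpow_toReal two_ne_zero ENNReal.ofNat_ne_top hX, Real.sqrt_eq_rpow]
  simp

lemma xiDist_eq_lpNorm {E : Type*} {f : E → Ω → ℝ} {σ : E → ℝ} {T : Set E}
    (hf : ∀ t ∈ T, MemLp (f t) 2 P) {u v : E × E} (hu : u ∈ T ×ˢ T) (hv : v ∈ T ×ˢ T) :
    xiDist P f σ u v =
      lpNorm ((σ u.1 • f u.1 - σ u.2 • f u.2) - (σ v.1 • f v.1 - σ v.2 • f v.2)) 2 P := by
  have hmeas : ∀ t ∈ T, AEStronglyMeasurable (σ t • f t) P := fun t ht =>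
    (hf t ht).aestronglyMeasurable.const_smul (σ t)
  rw [lpNorm_two_eq_sqrt_integral_sq (((hmeas _ hu.1).sub (hmeas _ hu.2)).sub
    ((hmeas _ hv.1).sub (hmeas _ hv.2)))]
  rfl

lemma integral_sub_sq_eq {X Y : Ω → ℝ} (hX : MemLp X 2 P) (hY : MemLp Y 2 P) :
    ∫ ω, (X ω - Y ω) ^ 2 ∂P =
      ∫ ω, X ω ^ 2 ∂P + ∫ ω, Y ω ^ 2 ∂P - 2 * ∫ ω, X ω * Y ω ∂P := by
  have hadd : Integrable (fun ω => X ω ^ 2 + Y ω ^ 2) P := hX.integrable_sq.add hY.integrable_sq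
  have hmul : Integrable (fun ω => X ω * Y ω) P := hX.integrable_mul hY
  calc ∫ ω, (X ω - Y ω) ^ 2 ∂P = ∫ ω, (X ω ^ 2 + Y ω ^ 2 - 2 * (X ω * Y ω)) ∂P := by
        congr with ω
        ring
    _ = ∫ ω, X ω ^ 2 ∂P + ∫ ω, Y ω ^ 2 ∂P - 2 * ∫ ω, X ω * Y ω ∂P := by
        rw [integral_sub hadd (hmul.const_mul 2),
          integral_add hX.integrable_sq hY.integrable_sq, integral_const_mul]

lemma isLpHolderOn_two_of_one_sub_correlation_le {E : Type*} [PseudoMetricSpace E]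
    {f : E → Ω → ℝ} {T : Set E} {κ γ : ℝ} (hf : ∀ t ∈ T, MemLp (f t) 2 P)
    (hf1 : ∀ t ∈ T, ∫ ω, f t ω ^ 2 ∂P = 1)
    (hr : ∀ s ∈ T, ∀ t ∈ T, 1 - ∫ ω, f s ω * f t ω ∂P ≤ κ * dist s t ^ γ) :
    IsLpHolderOn f 2 P √(2 * κ) (γ / 2) T where
  memLp := hf
  lpNorm_sub_le s hs t ht := by
    have hsq : ∫ ω, (f s - f t) ω ^ 2 ∂P = 2 * (1 - ∫ ω, f s ω * f t ω ∂P) := by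
      simp only [Pi.sub_apply]
      rw [integral_sub_sq_eq (hf s hs) (hf t ht), hf1 s hs, hf1 t ht]
      ring
    calc lpNorm (f s - f t) 2 P = √(2 * (1 - ∫ ω, f s ω * f t ω ∂P)) := by
          rw [lpNorm_two_eq_sqrt_integral_sq ((hf s hs).sub (hf t ht)).aestronglyMeasurable, hsq]
      _ ≤ √(2 * κ * dist s t ^ γ) := Real.sqrt_le_sqrt (by linarith [hr s hs t ht])
      _ = √(2 * κ) * dist s t ^ (γ / 2) := by
          rw [Real.sqrt_mul' _ (by positivity), Real.sqrt_eq_rpow (dist s t ^ γ),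
            ← Real.rpow_mul dist_nonneg, mul_one_div]

lemma isLpHolderOn_two_smul_of_one_sub_correlation_le {E : Type*} [PseudoMetricSpace E]
    {f : E → Ω → ℝ} {σ : E → ℝ} {T : Set E} {κ γ L β S D : ℝ} (hγ : 0 ≤ γ) (hL : 0 ≤ L)
    (hβ : 0 ≤ β) (hf : ∀ t ∈ T, MemLp (f t) 2 P) (hf1 : ∀ t ∈ T, ∫ ω, f t ω ^ 2 ∂P = 1)
    (hr : ∀ s ∈ T, ∀ t ∈ T, 1 - ∫ ω, f s ω * f t ω ∂P ≤ κ * dist s t ^ γ)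
    (hσ : ∀ s ∈ T, ∀ t ∈ T, |σ s - σ t| ≤ L * dist s t ^ β) (hσS : ∀ t ∈ T, |σ t| ≤ S)
    (hD : 0 ≤ D) (hTD : ∀ s ∈ T, ∀ t ∈ T, dist s t ≤ D) :
    IsLpHolderOn (fun t => σ t • f t) 2 P
      (L * D ^ (β - min β γ / 2) + S * (√(2 * κ) * D ^ (γ / 2 - min β γ / 2)))
      (min β γ / 2) T := by
  have hα : 0 ≤ min β γ / 2 := div_nonneg (le_min hβ hγ) zero_le_two
  have hfα := (isLpHolderOn_two_of_one_sub_correlation_le hf hf1 hr).mono_exponent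
    (Real.sqrt_nonneg _) hα (by gcongr; exact min_le_right _ _) hTD
  have hfM : ∀ t ∈ T, lpNorm (f t) 2 P ≤ 1 := fun t ht => by
    rw [lpNorm_two_eq_sqrt_integral_sq (hf t ht).aestronglyMeasurable, hf1 t ht, Real.sqrt_one]
  have hσα : ∀ s ∈ T, ∀ t ∈ T,
      |σ s - σ t| ≤ L * D ^ (β - min β γ / 2) * dist s t ^ (min β γ / 2) := fun s hs t ht =>
    calc |σ s - σ t| ≤ L * dist s t ^ β := hσ s hs t ht
      _ ≤ L * (D ^ (β - min β γ / 2) * dist s t ^ (min β γ / 2)) := by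
        gcongr
        exact rpow_le_mul_rpow_of_exponent_le dist_nonneg (hTD s hs t ht) hα
          ((half_le_self (le_min hβ hγ)).trans (min_le_left _ _))
      _ = L * D ^ (β - min β γ / 2) * dist s t ^ (min β γ / 2) := (mul_assoc _ _ _).symm
  simpa only [mul_one] using hfα.smul one_le_two (by positivity) hfM hσα hσS

lemma one_sub_correlation_le {E : Type*} [PseudoMetricSpace E] {f : E → Ω → ℝ} {T : Set E}
    {κ γ : ℝ} (hγ : γ ≠ 0) (hf1 : ∀ t ∈ T, ∫ ω, f t ω ^ 2 ∂P = 1)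
    (hr : ∀ s ∈ T, ∀ u ∈ T, ∀ s' ∈ T, ∀ u' ∈ T,
      |(∫ ω, f u ω * f s ω ∂P) - (∫ ω, f u' ω * f s' ω ∂P)| ≤
        κ * (dist u u' ^ γ + dist s s' ^ γ)) :
    ∀ s ∈ T, ∀ t ∈ T, 1 - ∫ ω, f s ω * f t ω ∂P ≤ κ * dist s t ^ γ := by
  intro s hs t ht
  have h := (le_abs_self _).trans (hr s hs s hs t ht s hs)
  simpa only [← pow_two, hf1 s hs, dist_self, Real.zero_rpow hγ, zero_add] using h

lemma memLp_two_of_map_eq_gaussianReal {X : Ω → ℝ} {m : ℝ} {v : ℝ≥0} (hX : AEMeasurable X P)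
    (h : P.map X = gaussianReal m v) : MemLp X 2 P :=
  (HasLaw.hasGaussianLaw (μ := gaussianReal m v) ⟨hX, h⟩).memLp_two

lemma integral_sq_of_map_eq_gaussianReal {X : Ω → ℝ} {v : ℝ≥0} (hX : AEMeasurable X P)
    (h : P.map X = gaussianReal 0 v) : ∫ ω, X ω ^ 2 ∂P = v := by
  have hlaw : HasLaw X (gaussianReal 0 v) P := ⟨hX, h⟩
  have hmean : ∫ ω, X ω ∂P = 0 := by rw [hlaw.integral_eq, integral_id_gaussianReal]
  rw [← variance_of_integral_eq_zero hX hmean, hlaw.variance_eq, variance_id_gaussianReal]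

end SecondMoments

section NearDiagonal

lemma nearDiag_subset_prod {d : ℕ} {T : Set (EuclideanSpace ℝ (Fin d))} {κm : ℝ} {N : ℕ} :
    nearDiag d T κm N ⊆ T ×ˢ T :=
  fun _ hu => ⟨hu.1, hu.2.1⟩

variable {Ω : Type*} [MeasurableSpace Ω] {P : Measure Ω} {d : ℕ}
  {T : Set (EuclideanSpace ℝ (Fin d))} {f : EuclideanSpace ℝ (Fin d) → Ω → ℝ}
  {σ : EuclideanSpace ℝ (Fin d) → ℝ} {C α κm : ℝ} {N : ℕ}

lemma coverNumOn_nearDiag_le {R ε : ℝ} (hR : 0 ≤ R) (hT : T ⊆ closedBall 0 R)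
    (hf : ∀ t ∈ T, MemLp (f t) 2 P) (hX : IsLpHolderOn (fun t => σ t • f t) 2 P C α T)
    (hC : 0 < C) (hα : 0 < α) (hε : 0 < ε) (hε1 : ε ≤ 1) :
    (coverNumOn (nearDiag d T κm N) (xiDist P f σ) ε : ℝ) ≤
      (1 + 2 * R * (2 * C) ^ α⁻¹) ^ (2 * d) * (1 / ε) ^ (2 * d / α) := by
  have hball : nearDiag d T κm N ⊆ closedBall 0 R := by
    refine nearDiag_subset_prod.trans ((prod_mono hT hT).trans ?_)
    exact (closedBall_prod_same 0 0 R).subset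
  have hdim : finrank ℝ (EuclideanSpace ℝ (Fin d) × EuclideanSpace ℝ (Fin d)) = 2 * d := by
    rw [finrank_prod, finrank_euclideanSpace_fin, two_mul]
  have hHolder : ∀ u ∈ nearDiag d T κm N, ∀ v ∈ nearDiag d T κm N,
      xiDist P f σ u v ≤ 2 * C * dist u v ^ α := fun u hu v hv => by
    rw [xiDist_eq_lpNorm hf (nearDiag_subset_prod hu) (nearDiag_subset_prod hv)]
    exact hX.lpNorm_increment_sub_le_dist one_le_two hC.le hα.le
      (nearDiag_subset_prod hu) (nearDiag_subset_prod hv)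
  simpa only [hdim, Nat.cast_mul, Nat.cast_ofNat] using
    coverNumOn_le_of_holder hR hball (by positivity) hα hHolder hε hε1

lemma xiDist_le_of_mem_nearDiag (hf : ∀ t ∈ T, MemLp (f t) 2 P)
    (hX : IsLpHolderOn (fun t => σ t • f t) 2 P C α T) (hC : 0 ≤ C) (hα : 0 ≤ α) (hκm : 0 ≤ κm)
    {u v : EuclideanSpace ℝ (Fin d) × EuclideanSpace ℝ (Fin d)}
    (hu : u ∈ nearDiag d T κm N) (hv : v ∈ nearDiag d T κm N) :
    xiDist P f σ u v ≤ 2 * C * κm ^ α * (N : ℝ) ^ (-α) := by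
  rw [xiDist_eq_lpNorm hf (nearDiag_subset_prod hu) (nearDiag_subset_prod hv), mul_assoc,
    Real.rpow_neg N.cast_nonneg, ← div_eq_mul_inv, ← Real.div_rpow hκm N.cast_nonneg]
  exact hX.lpNorm_increment_sub_le_of_dist_le one_le_two hC hα
    (nearDiag_subset_prod hu) (nearDiag_subset_prod hv) hu.2.2 hv.2.2

end NearDiagonal

theorem entropy_and_diameter_near_diagonal_general.{u} {d : ℕ}
    {T : Set (EuclideanSpace ℝ (Fin d))} (hT : Bornology.IsBounded T)
    {S β κH β' κH' κm : ℝ} (hS : 0 ≤ S) (hβ : 0 < β) (hκH : 0 < κH) (hβ' : 0 < β')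
    (hκm : 0 ≤ κm) :
    ∃ κt > (0 : ℝ), ∀ {Ω : Type u} [MeasurableSpace Ω] (P : Measure Ω)
      (f : EuclideanSpace ℝ (Fin d) → Ω → ℝ),
      (∀ t ∈ T, MemLp (f t) 2 P) →
      (∀ t ∈ T, ∫ ω, f t ω ^ 2 ∂P = 1) →
      (∀ s ∈ T, ∀ t ∈ T, 1 - ∫ ω, f s ω * f t ω ∂P ≤ κH' * dist s t ^ β') →
      ∀ σ : EuclideanSpace ℝ (Fin d) → ℝ,
        (∀ t ∈ T, |σ t| ≤ S) →
        (∀ s ∈ T, ∀ t ∈ T, |σ s - σ t| ≤ κH * dist s t ^ β) →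
      ∀ N : ℕ, 1 ≤ N →
        (∀ ε ∈ Set.Ioo (0 : ℝ) 1,
          Real.log (coverNumOn (nearDiag d T κm N) (xiDist P f σ) ε) ≤
            Real.log κt + (4 * (d : ℝ) / min β β') * Real.log (1 / ε)) ∧
        ⨆ p : nearDiag d T κm N, ⨆ q : nearDiag d T κm N, xiDist P f σ p.1 q.1 ≤
          κt * (N : ℝ) ^ (-(min β β' / 2)) := by
  obtain ⟨R, hR, hTR⟩ := hT.exists_pos_norm_le
  have hball : T ⊆ closedBall 0 R := fun t ht => mem_closedBall_zero_iff.2 (hTR t ht)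
  have hdist : ∀ s ∈ T, ∀ t ∈ T, dist s t ≤ 2 * R := fun s hs t ht => by
    linarith [dist_le_norm_add_norm s t, hTR s hs, hTR t ht]
  set α := min β β' / 2 with hα_def
  have hα : 0 < α := half_pos (lt_min hβ hβ')
  set C := κH * (2 * R) ^ (β - α) + S * (√(2 * κH') * (2 * R) ^ (β' / 2 - α))
  have hC : 0 < C := by positivity
  set κ₁ := (1 + 2 * R * (2 * C) ^ α⁻¹) ^ (2 * d)
  set κ₂ := 2 * C * κm ^ α
  have hκ₁ : 1 ≤ κ₁ := one_le_pow₀ (le_add_of_nonneg_right (by positivity))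
  have hκ₂ : 0 ≤ κ₂ := by positivity
  refine ⟨κ₁ + κ₂, by positivity, fun {Ω} _ P f hf hf1 hr σ hσS hσ N _ => ?_⟩
  have hX : IsLpHolderOn (fun t => σ t • f t) 2 P C α T :=
    isLpHolderOn_two_smul_of_one_sub_correlation_le hβ'.le hκH.le hβ.le hf hf1 hr hσ hσS
      (by positivity) hdist
  have hexp : 4 * (d : ℝ) / min β β' = 2 * d / α := by rw [hα_def]; field_simp; ring
  refine ⟨fun ε ⟨hε, hε1⟩ => ?_, ?_⟩
  · rw [hexp]
    refine log_natCast_le_of_le_mul_rpow (le_add_of_le_of_nonneg hκ₁ hκ₂)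
      ((one_le_div hε).2 hε1.le) (by positivity) ?_
    refine (coverNumOn_nearDiag_le hR.le hball hf hX hC hα hε hε1.le).trans ?_
    gcongr
    exact le_add_of_nonneg_right hκ₂
  · have hdiam : κ₂ * (N : ℝ) ^ (-α) ≤ (κ₁ + κ₂) * (N : ℝ) ^ (-α) := by
      gcongr
      exact le_add_of_nonneg_left (zero_le_one.trans hκ₁)
    have hnonneg : 0 ≤ (κ₁ + κ₂) * (N : ℝ) ^ (-α) := by positivity
    exact Real.iSup_le (fun p => Real.iSup_le (fun q =>
      (xiDist_le_of_mem_nearDiag hf hX hC.le hα.le hκm p.2 q.2).trans hdiam) hnonneg) hnonneg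

/-- **Entropy and diameter of the near-diagonal set under `d_ξ`.**  There are constants
`κ̃` (and `ε̃`), uniform over all `σ` in the class C1 and all fields `f` satisfying
C3–C4, such that for the set `U = {(s,t) ∈ T×T : |s−t| ≤ κ_m/N}` with the pseudo-metric
`d_ξ`: (i) for every `ε ∈ (0,1)`, `log N(ε) ≤ log κ̃ + (4d/β*) log(1/ε)`; and
(ii) `diam_{d_ξ}(U) ≤ κ̃ N^{−β*/2}`. -/
theorem entropy_and_diameter_near_diagonal
    {Ω : Type*} [MeasurableSpace Ω] (P : Measure Ω) [IsProbabilityMeasure P]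
    {d : ℕ} (T : Set (EuclideanSpace ℝ (Fin d)))
    (hT : IsCompact T) (hTne : T.Nonempty)
    (σl σu β κH β' κH' κm : ℝ)
    (hσl : 0 < σl) (hσ : σl ≤ σu) (hβ : 0 < β) (hκH : 0 < κH)
    (hβ' : 0 < β') (hκH' : 0 < κH') (hκm : 0 < κm) :
    ∃ κt > (0 : ℝ), ∀ f : EuclideanSpace ℝ (Fin d) → Ω → ℝ,
      (∀ u, Measurable (f u)) →
      (∀ s : Finset (EuclideanSpace ℝ (Fin d)), ↑s ⊆ T →
        ∀ c : EuclideanSpace ℝ (Fin d) → ℝ, ∃ v : NNReal,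
          Measure.map (fun ω => ∑ u ∈ s, c u * f u ω) P = gaussianReal 0 v) →
      (∀ u ∈ T, Measure.map (f u) P = gaussianReal 0 1) →
      (∀ᵐ ω ∂P, ContinuousOn (fun u => f u ω) T) →
      (∀ s ∈ T, ∀ u ∈ T, ∀ s' ∈ T, ∀ u' ∈ T,
        |(∫ ω, f u ω * f s ω ∂P) - (∫ ω, f u' ω * f s' ω ∂P)| ≤
          κH' * (dist u u' ^ β' + dist s s' ^ β')) →
      ∀ σ : EuclideanSpace ℝ (Fin d) → ℝ,
        (∀ u ∈ T, σ u ∈ Set.Icc σl σu) →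
        (∀ s ∈ T, ∀ u ∈ T, |σ u - σ s| ≤ κH * dist s u ^ β) →
      ∀ N : ℕ, 1 ≤ N →
        (∀ ε ∈ Set.Ioo (0 : ℝ) 1,
          Real.log ((coverNumOn (nearDiag d T κm N) (xiDist P f σ) ε : ℕ) : ℝ) ≤
            Real.log κt + (4 * (d : ℝ) / min β β') * Real.log (1 / ε)) ∧
        (⨆ p : ↥(nearDiag d T κm N), ⨆ q : ↥(nearDiag d T κm N),
            xiDist P f σ p.1 q.1) ≤ κt * (N : ℝ) ^ (-(min β β' / 2)) := by
  obtain ⟨κt, hκt, hbound⟩ := entropy_and_diameter_near_diagonal_general (κH' := κH')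
    hT.isBounded (hσl.le.trans hσ) hβ hκH hβ' hκm.le
  refine ⟨κt, hκt, fun f hmeas _ hgauss _ hcorr σ hσmem hσHolder => ?_⟩
  have hf1 : ∀ t ∈ T, ∫ ω, f t ω ^ 2 ∂P = 1 := fun t ht => by
    simpa only [NNReal.coe_one] using
      integral_sq_of_map_eq_gaussianReal (hmeas t).aemeasurable (hgauss t ht)
  exact hbound P f
    (fun t ht => memLp_two_of_map_eq_gaussianReal (hmeas t).aemeasurable (hgauss t ht)) hf1
    (one_sub_correlation_le hβ'.ne' hf1 hcorr) σ
    (fun t ht => (abs_of_pos (hσl.trans_le (hσmem t ht).1)).trans_le (hσmem t ht).2)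
    (fun s hs t ht => abs_sub_comm (σ s) (σ t) ▸ hσHolder s hs t ht)
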